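/- Let X be a metric space with metric d, T : X → X a continuous map, and u ∈ X a point whose orbit {T^n u : n ≥ 0} has compact closure. Assume every point of the ω-limit set ω(u) belongs to the Fatou set of T, i.e. for every y ∈ ω(u), the family of iterates {T^n : n ≥ 1} is equicontinuous at y: for every ε > 0 there exists δ > 0 such that d(x, y) < δ implies d(T^n x, T^n y) < ε for all n ≥ 1. Then for every y ∈ ω(u), the ω-limit set ω(y) equals ω(u); i.e. (ω(u), T restricted to ω(u)) is a minimal dynamical system. -/

import Mathlib

open Filter Topology

/-- The ω-limit set of `u` under `T`: all limits of convergent subsequences of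
the orbit sequence `(T^[n] u)`. -/
def omegaLimitSet {X : Type*} [MetricSpace X] (T : X → X) (u : X) : Set X :=
  {x | ∃ φ : ℕ → ℕ, StrictMono φ ∧ Tendsto (fun n => T^[φ n] u) atTop (𝓝 x)}

theorem mem_omegaLimitSet_iff_aux {X : Type*} [MetricSpace X] (T : X → X) (u x : X) :
    x ∈ omegaLimitSet T u ↔
      ∀ ε > (0 : ℝ), ∀ N : ℕ, ∃ n, N ≤ n ∧ dist (T^[n] u) x < ε := by
  constructor
  · rintro ⟨φ, hφ, hlim⟩ ε hε N
    obtain ⟨M, hM⟩ := Metric.tendsto_atTop.1 hlim ε hε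
    exact ⟨φ (max M N), (le_max_right M N).trans (hφ.id_le _), hM _ (le_max_left M N)⟩
  · intro h
    have hcl : MapClusterPt x atTop (fun n => T^[n] u) := by
      rw [mapClusterPt_iff_frequently]
      intro s hs
      obtain ⟨ε, hε, hs⟩ := Metric.mem_nhds_iff.1 hs
      rw [frequently_atTop]
      intro N
      obtain ⟨n, hn, hd⟩ := h ε hε N
      exact ⟨n, hn, hs hd⟩
    exact TopologicalSpace.FirstCountableTopology.tendsto_subseq hcl

/-- If `ω(u)` is contained in the Fatou set of `T` (the iterates are
equicontinuous at each point of `ω(u)`), then `(ω(u), T)` is a minimal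
dynamical system: `ω(y) = ω(u)` for every `y ∈ ω(u)`. -/
theorem omegaLimitSet_in_Fatou_minimal {X : Type*} [MetricSpace X]
    (T : X → X) (hT : Continuous T) (u : X)
    (hc : IsCompact (closure (Set.range fun n => T^[n] u)))
    (hfatou : ∀ y ∈ omegaLimitSet T u, ∀ ε > (0 : ℝ), ∃ δ > (0 : ℝ), ∀ x : X,
      dist x y < δ → ∀ n : ℕ, 1 ≤ n → dist (T^[n] x) (T^[n] y) < ε) :
    ∀ y ∈ omegaLimitSet T u, omegaLimitSet T y = omegaLimitSet T u := by
  intro y hy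
  have hy' := (mem_omegaLimitSet_iff_aux T u y).1 hy
  ext z
  rw [mem_omegaLimitSet_iff_aux, mem_omegaLimitSet_iff_aux]
  constructor
  · intro hz ε hε N
    obtain ⟨n, hn, hd⟩ := hz (ε / 2) (half_pos hε) N
    obtain ⟨δ, hδ, hcont⟩ := Metric.continuous_iff.1 (hT.iterate n) y (ε / 2) (half_pos hε)
    obtain ⟨m, -, hm⟩ := hy' δ hδ 0
    refine ⟨n + m, by omega, ?_⟩
    rw [Function.iterate_add_apply]
    have h1 := hcont _ hm
    have h2 := dist_triangle (T^[n] (T^[m] u)) (T^[n] y) z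
    linarith
  · intro hz ε hε N
    obtain ⟨δ, hδ, hF⟩ := hfatou y hy (ε / 2) (half_pos hε)
    obtain ⟨m, -, hm⟩ := hy' δ hδ 0
    obtain ⟨k, hk, hd⟩ := hz (ε / 2) (half_pos hε) (m + N + 1)
    obtain ⟨n, rfl⟩ : ∃ n, k = n + m := ⟨k - m, by omega⟩
    refine ⟨n, by omega, ?_⟩
    rw [Function.iterate_add_apply] at hd
    have h1 := hF _ hm n (by omega)
    have h2 := dist_triangle_left (T^[n] y) z (T^[n] (T^[m] u))
    linarith
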